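/- arXiv:2204.02745 — 2 statements merged into one kernel-verified Lean document; each statement's English description precedes it below -/
import Mathlib

section
/- Let v be holomorphic on a neighborhood of the closed unit disk with v(0) = 0, v'(0) = -ω for some ω > 0, v(z) ≠ 0 for 0 < |z| ≤ 1, and Re(conj(z) v(z)) < 0 on the unit circle. Let f_t be the flow of v. Then for each z in the open unit disk, the limit h(z) := lim_{t→∞} e^{ωt} f_t(z) exists, the convergence is locally uniform, h is holomorphic on the disk with h'(0) = 1, and h satisfies the functional equation ω h(z) = -h'(z) v(z) for all z in the disk. -/
open Complex Metric Filter Topology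

/-!
Write `v z = z p(z)`. The maximum principle turns the boundary condition into `Re p < 0` on the
disk, so `‖f_t z‖` decays exponentially, locally uniformly in `z`. Moreover `p` has no zeros, so the
equation `ω h = -h' v` of the Koenigs function can be solved directly: with `h = z e^ψ` it becomes
`ψ' = -(p - p(0)) / (z p)`, whose right-hand side is holomorphic. Along trajectories `h` then solves
a scalar linear equation, so `h (f_t z) = e^{-ωt} h z`, that is, `e^{ωt} f_t z = h z e^{-ψ(f_t z)}`,
and the last factor tends to `e^{-ψ(0)} = 1`.
-/

section MaximumPrinciple

variable {E : Type*} [NormedAddCommGroup E] [NormedSpace ℂ E] {f : E → ℂ} {U : Set E} {C : ℝ}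

theorem re_le_of_forall_mem_frontier_re_le [Nontrivial E] (hU : Bornology.IsBounded U)
    (hf : DiffContOnCl ℂ f U) (hC : ∀ z ∈ frontier U, (f z).re ≤ C) {z : E}
    (hz : z ∈ closure U) : (f z).re ≤ C := by
  have hexp : DiffContOnCl ℂ (fun w => exp (f w)) U :=
    differentiable_exp.comp_diffContOnCl hf
  have hle := norm_le_of_forall_mem_frontier_norm_le hU hexp (C := Real.exp C)
    (fun w hw => by simpa only [norm_exp, Real.exp_le_exp] using hC w hw) hz
  simpa only [norm_exp, Real.exp_le_exp] using hle

theorem re_lt_of_isPreconnected_of_re_le {c : E} (hpre : IsPreconnected U) (hU : IsOpen U)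
    (hf : DifferentiableOn ℂ f U) (hle : ∀ z ∈ U, (f z).re ≤ C) (hc : c ∈ U)
    (hlt : (f c).re < C) {z : E} (hz : z ∈ U) : (f z).re < C := by
  refine (hle z hz).lt_of_ne fun heq => hlt.ne ?_
  have hmax : IsMaxOn (norm ∘ fun w => exp (f w)) U z := fun w hw => by
    simpa [norm_exp, heq] using hle w hw
  simpa [norm_exp, heq] using norm_eqOn_of_isPreconnected_of_isMaxOn hpre hU hf.cexp hz hmax hc

end MaximumPrinciple

theorem tendstoLocallyUniformlyOn_comp_const {ι α β γ : Type*} [TopologicalSpace α]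
    [UniformSpace β] [UniformSpace γ] {F : ι → α → β} {g : β → γ} {b : β} {l : Filter ι}
    {s : Set α} (hF : TendstoLocallyUniformlyOn F (fun _ => b) l s) (hg : ContinuousAt g b) :
    TendstoLocallyUniformlyOn (fun i x => g (F i x)) (fun _ => g b) l s := by
  rw [tendstoLocallyUniformlyOn_iff_filter] at hF ⊢
  exact fun x hx =>
    tendsto_prod_filter_iff.1 (hg.tendsto.comp (tendsto_prod_filter_iff.2 (hF x hx)))

theorem norm_le_exp_mul_norm_of_inner_le {E : Type*} [NormedAddCommGroup E]
    [InnerProductSpace ℝ E] {u u' : ℝ → E} {K : ℝ} (hu : ∀ t, 0 ≤ t → HasDerivAt u (u' t) t)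
    (hK : ∀ t, 0 ≤ t → inner ℝ (u t) (u' t) ≤ K * ‖u t‖ ^ 2) {t : ℝ} (ht : 0 ≤ t) :
    ‖u t‖ ≤ Real.exp (K * t) * ‖u 0‖ := by
  have hderiv (s : ℝ) (hs : 0 ≤ s) := (hu s hs).norm_sq
  have hsq : ‖u t‖ ^ 2 ≤ gronwallBound (‖u 0‖ ^ 2) (2 * K) 0 (t - 0) :=
    le_gronwallBound_of_liminf_deriv_right_le
      (fun s hs => (hderiv s hs.1).continuousAt.continuousWithinAt)
      (fun s hs _ hr => (hderiv s hs.1).hasDerivWithinAt.liminf_right_slope_le hr) le_rfl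
      (fun s hs => by linarith [hK s hs.1]) t ⟨ht, le_rfl⟩
  refine le_of_sq_le_sq (hsq.trans_eq ?_) (by positivity)
  rw [gronwallBound_ε0, sub_zero, mul_pow, ← Real.exp_nat_mul]
  push_cast
  ring_nf

theorem eq_exp_mul_of_hasDerivAt_mul {y : ℝ → ℂ} {a : ℂ}
    (hy : ∀ t, 0 ≤ t → HasDerivAt y (a * y t) t) {t : ℝ} (ht : 0 ≤ t) :
    y t = exp (a * t) * y 0 := by
  have hderiv (s : ℝ) (hs : 0 ≤ s) : HasDerivAt (fun s : ℝ => exp (-a * s) * y s) 0 s := by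
    have hexp : HasDerivAt (fun s : ℝ => exp (-a * s)) (exp (-a * s) * -a) s := by
      simpa using ((ofRealCLM.hasDerivAt (x := s)).const_mul (-a)).cexp
    exact (hexp.mul (hy s hs)).congr_deriv (by ring)
  have hconst : exp (-a * t) * y t = y 0 := by
    simpa using constant_of_has_deriv_right_zero
      (fun s hs => (hderiv s hs.1).continuousAt.continuousWithinAt)
      (fun s hs => (hderiv s hs.1).hasDerivWithinAt) t ⟨ht, le_rfl⟩
  rw [← hconst, ← mul_assoc, ← exp_add, neg_mul, add_neg_cancel, exp_zero, one_mul]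

theorem apply_trajectory_eq_exp_mul {v h : ℂ → ℂ} {S : Set ℂ} {a : ℂ} {u : ℝ → ℂ}
    (hS : IsOpen S) (hh : DifferentiableOn ℂ h S) (hhv : ∀ z ∈ S, deriv h z * v z = a * h z)
    (hmem : ∀ t, 0 ≤ t → u t ∈ S) (hode : ∀ t, 0 ≤ t → HasDerivAt u (v (u t)) t)
    {t : ℝ} (ht : 0 ≤ t) : h (u t) = exp (a * t) * h (u 0) := by
  refine eq_exp_mul_of_hasDerivAt_mul (y := h ∘ u) (fun s hs => ?_) ht
  have hderiv := (hh.differentiableAt (hS.mem_nhds (hmem s hs))).hasDerivAt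
  exact (hderiv.comp s (hode s hs)).congr_deriv (hhv _ (hmem s hs))

section VectorField

variable {v : ℂ → ℂ} {R : ℝ}

theorem re_conj_mul_eq_norm_sq_mul_re_dslope (h0 : v 0 = 0) (z : ℂ) :
    (starRingEnd ℂ z * v z).re = ‖z‖ ^ 2 * (dslope v 0 z).re := by
  rw [← sub_smul_dslope_of_zero h0 z, sub_zero, smul_eq_mul, ← mul_assoc, conj_mul',
    ← ofReal_pow, re_ofReal_mul]

theorem re_conj_mul_nonpos_of_sphere (hv : DifferentiableOn ℂ v (closedBall 0 R)) (h0 : v 0 = 0)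
    (hb : ∀ z ∈ sphere (0 : ℂ) R, (starRingEnd ℂ z * v z).re ≤ 0) {z : ℂ}
    (hz : z ∈ ball (0 : ℂ) R) : (starRingEnd ℂ z * v z).re ≤ 0 := by
  have hR : 0 < R := pos_of_mem_ball hz
  have hp : DiffContOnCl ℂ (dslope v 0) (ball 0 R) := by
    refine DifferentiableOn.diffContOnCl ?_
    rw [closure_ball 0 hR.ne']
    exact (differentiableOn_dslope (closedBall_mem_nhds 0 hR)).2 hv
  rw [re_conj_mul_eq_norm_sq_mul_re_dslope h0]
  refine mul_nonpos_of_nonneg_of_nonpos (sq_nonneg _)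
    (re_le_of_forall_mem_frontier_re_le isBounded_ball hp (fun w hw => ?_) (subset_closure hz))
  rw [frontier_ball 0 hR.ne'] at hw
  have hw_norm : 0 < ‖w‖ ^ 2 := by
    rw [mem_sphere_zero_iff_norm.1 hw]
    positivity
  have hbw := hb w hw
  rw [re_conj_mul_eq_norm_sq_mul_re_dslope h0] at hbw
  exact nonpos_of_mul_nonpos_right hbw hw_norm

theorem re_dslope_neg (hv : DifferentiableOn ℂ v (ball 0 R)) (h0 : v 0 = 0)
    (hv' : (deriv v 0).re < 0) (hre : ∀ z ∈ ball (0 : ℂ) R, (starRingEnd ℂ z * v z).re ≤ 0)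
    {z : ℂ} (hz : z ∈ ball (0 : ℂ) R) : (dslope v 0 z).re < 0 := by
  have hR : 0 < R := pos_of_mem_ball hz
  refine re_lt_of_isPreconnected_of_re_le (convex_ball 0 R).isPreconnected isOpen_ball
    ((differentiableOn_dslope (ball_mem_nhds 0 hR)).2 hv) (fun w hw => ?_)
    (mem_ball_self hR) (by rwa [dslope_same]) hz
  rcases eq_or_ne w 0 with rfl | hw0
  · rw [dslope_same]
    exact hv'.le
  · have hrew := hre w hw
    rw [re_conj_mul_eq_norm_sq_mul_re_dslope h0] at hrew
    exact nonpos_of_mul_nonpos_right hrew (by positivity)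

theorem exists_forall_re_conj_mul_le (hv : DifferentiableOn ℂ v (ball 0 R)) (h0 : v 0 = 0)
    (hneg : ∀ z ∈ ball (0 : ℂ) R, (dslope v 0 z).re < 0) {r : ℝ} (hr : r < R) :
    ∃ c > 0, ∀ z ∈ closedBall (0 : ℂ) r, (starRingEnd ℂ z * v z).re ≤ -c * ‖z‖ ^ 2 := by
  have hp : ContinuousOn (fun z => -(dslope v 0 z).re) (closedBall 0 r) := by
    rcases lt_or_ge r 0 with hr0 | hr0
    · simp [closedBall_eq_empty.2 hr0]
    · have hball : ball (0 : ℂ) R ∈ 𝓝 0 := ball_mem_nhds 0 (hr0.trans_lt hr)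
      have hdslope := ((differentiableOn_dslope hball).2 hv).continuousOn
      exact (continuous_re.comp_continuousOn (hdslope.mono (closedBall_subset_ball hr))).neg
  obtain ⟨c, hc, hcp⟩ := (isCompact_closedBall (0 : ℂ) r).exists_forall_le' hp
    fun z hz => neg_pos.2 (hneg z (closedBall_subset_ball hr hz))
  refine ⟨c, hc, fun z hz => ?_⟩
  rw [re_conj_mul_eq_norm_sq_mul_re_dslope h0, mul_comm]
  gcongr
  linarith [hcp z hz]

theorem exists_koenigs_exponent (hR : 0 < R) (hv : DifferentiableOn ℂ v (ball 0 R)) (h0 : v 0 = 0)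
    (hne : ∀ z ∈ ball (0 : ℂ) R, dslope v 0 z ≠ 0) :
    ∃ ψ : ℂ → ℂ, ψ 0 = 0 ∧ DifferentiableOn ℂ ψ (ball 0 R) ∧
      ∀ z ∈ ball (0 : ℂ) R,
        deriv (fun w => w * exp (ψ w)) z * v z = deriv v 0 * (z * exp (ψ z)) := by
  have hball : ball (0 : ℂ) R ∈ 𝓝 0 := ball_mem_nhds 0 hR
  have hp : DifferentiableOn ℂ (dslope v 0) (ball 0 R) := (differentiableOn_dslope hball).2 hv
  have hq : DifferentiableOn ℂ (dslope (dslope v 0) 0) (ball 0 R) :=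
    (differentiableOn_dslope hball).2 hp
  obtain ⟨ψ, hψ0, hψ⟩ := (hq.fun_neg.div hp hne).isExactOn_ball.with_val_at 0 0
  refine ⟨ψ, hψ0, fun z hz => (hψ z hz).differentiableAt.differentiableWithinAt, fun z hz => ?_⟩
  have hvz : z * dslope v 0 z = v z := by simpa using sub_smul_dslope_of_zero h0 z
  have hpz : z * dslope (dslope v 0) 0 z = dslope v 0 z - deriv v 0 := by
    simpa using sub_smul_dslope (dslope v 0) 0 z
  have hderiv : deriv (fun w => w * exp (ψ w)) z = exp (ψ z) *
      (1 - z * dslope (dslope v 0) 0 z / dslope v 0 z) :=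
    ((hasDerivAt_id' z).mul (hψ z hz).cexp).deriv.trans <| by
      simp only [Pi.div_apply]
      ring
  rw [hderiv, hpz, ← hvz]
  field [hne z hz]

theorem norm_le_exp_mul_norm_of_re_conj_mul_le {u : ℝ → ℂ} {r c : ℝ}
    (hre : ∀ z ∈ closedBall (0 : ℂ) r, (starRingEnd ℂ z * v z).re ≤ -c * ‖z‖ ^ 2)
    (hnonpos : ∀ t, 0 ≤ t → (starRingEnd ℂ (u t) * v (u t)).re ≤ 0)
    (hu0 : u 0 ∈ closedBall (0 : ℂ) r) (hode : ∀ t, 0 ≤ t → HasDerivAt u (v (u t)) t)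
    {t : ℝ} (ht : 0 ≤ t) : ‖u t‖ ≤ Real.exp (-c * t) * ‖u 0‖ := by
  have hmem (s : ℝ) (hs : 0 ≤ s) : u s ∈ closedBall (0 : ℂ) r := by
    have hle : ‖u s‖ ≤ Real.exp (0 * s) * ‖u 0‖ := norm_le_exp_mul_norm_of_inner_le hode
      (fun τ hτ => by simpa only [Complex.inner, mul_comm (v _), zero_mul] using hnonpos τ hτ) hs
    rw [zero_mul, Real.exp_zero, one_mul] at hle
    exact mem_closedBall_zero_iff.2 (hle.trans (mem_closedBall_zero_iff.1 hu0))
  refine norm_le_exp_mul_norm_of_inner_le hode (fun s hs => ?_) ht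
  rw [Complex.inner, mul_comm]
  exact hre _ (hmem s hs)

end VectorField

section Flow

variable {v : ℂ → ℂ} {R : ℝ} {f : ℝ → ℂ → ℂ}

theorem tendstoLocallyUniformlyOn_flow_zero (hv : DifferentiableOn ℂ v (ball 0 R)) (h0 : v 0 = 0)
    (hneg : ∀ z ∈ ball (0 : ℂ) R, (dslope v 0 z).re < 0)
    (hf0 : ∀ z ∈ ball (0 : ℂ) R, f 0 z = z)
    (hmem : ∀ t, 0 ≤ t → ∀ z ∈ ball (0 : ℂ) R, f t z ∈ ball (0 : ℂ) R)
    (hode : ∀ z ∈ ball (0 : ℂ) R, ∀ t, 0 ≤ t → HasDerivAt (fun s => f s z) (v (f t z)) t) :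
    TendstoLocallyUniformlyOn f 0 atTop (ball 0 R) := by
  refine tendstoLocallyUniformlyOn_of_forall_exists_nhds fun z₀ hz₀ => ?_
  obtain ⟨r, hz₀r, hrR⟩ := exists_between (mem_ball_zero_iff.1 hz₀)
  obtain ⟨c, hc, hcv⟩ := exists_forall_re_conj_mul_le hv h0 hneg hrR
  refine ⟨closedBall 0 r, mem_nhdsWithin_of_mem_nhds
    (closedBall_mem_nhds_of_mem (mem_ball_zero_iff.2 hz₀r)), ?_⟩
  have hexp : Tendsto (fun t => Real.exp (-c * t) * r) atTop (𝓝 0) := by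
    simpa using (Real.tendsto_exp_atBot.comp
      (tendsto_id.const_mul_atTop_of_neg (neg_neg_of_pos hc))).mul_const r
  refine Metric.tendstoUniformlyOn_iff.2 fun ε hε => ?_
  filter_upwards [hexp.eventually_lt_const hε, eventually_ge_atTop 0] with t htε ht z hz
  have hzR : z ∈ ball (0 : ℂ) R := closedBall_subset_ball hrR hz
  have hdecay : ‖f t z‖ ≤ Real.exp (-c * t) * ‖f 0 z‖ :=
    norm_le_exp_mul_norm_of_re_conj_mul_le (u := fun s => f s z) hcv
      (fun s hs => by
        rw [re_conj_mul_eq_norm_sq_mul_re_dslope h0]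
        exact mul_nonpos_of_nonneg_of_nonpos (sq_nonneg _) (hneg _ (hmem s hs z hzR)).le)
      (by rwa [hf0 z hzR]) (hode z hzR) ht
  rw [Pi.zero_apply, dist_zero_left]
  calc ‖f t z‖ ≤ Real.exp (-c * t) * ‖f 0 z‖ := hdecay
    _ ≤ Real.exp (-c * t) * r := by
      rw [hf0 z hzR]
      gcongr
      exact mem_closedBall_zero_iff.1 hz
    _ < ε := htε

theorem tendstoLocallyUniformlyOn_exp_mul_flow {ψ : ℂ → ℂ} {ω : ℂ} {S : Set ℂ}
    (hψ0 : ψ 0 = 0) (hψ : ContinuousOn ψ S) (hS : S ∈ 𝓝 0)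
    (hf : TendstoLocallyUniformlyOn f 0 atTop S)
    (hconj : ∀ t : ℝ, 0 ≤ t → ∀ z ∈ S,
      f t z * exp (ψ (f t z)) = exp (-ω * t) * (z * exp (ψ z))) :
    TendstoLocallyUniformlyOn (fun (t : ℝ) z => exp (ω * t) * f t z)
      (fun z => z * exp (ψ z)) atTop S := by
  have hcorr : TendstoLocallyUniformlyOn (fun t z => exp (-ψ (f t z))) (fun _ => 1) atTop S := by
    simpa [hψ0] using tendstoLocallyUniformlyOn_comp_const (b := 0) hf (hψ.continuousAt hS).neg.cexp
  have hconst : TendstoLocallyUniformlyOn (fun (_ : ℝ) z => z * exp (ψ z))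
      (fun z => z * exp (ψ z)) atTop S := fun u hu _ _ =>
    ⟨S, self_mem_nhdsWithin, .of_forall fun _ _ _ => refl_mem_uniformity hu⟩
  have hprod := (hconst.mul₀ hcorr (continuousOn_id.mul hψ.cexp) continuousOn_const).congr_right
    fun z _ => mul_one (z * exp (ψ z))
  refine hprod.congr_inseparable ?_
  filter_upwards [eventually_ge_atTop 0] with t ht z hz
  refine .of_eq ?_
  calc z * exp (ψ z) * exp (-ψ (f t z))
      = exp (ω * t) * (exp (-ω * t) * (z * exp (ψ z))) * exp (-ψ (f t z)) := by
        rw [← mul_assoc (exp _), ← exp_add, neg_mul, add_neg_cancel, exp_zero, one_mul]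
    _ = exp (ω * t) * (f t z * exp (ψ (f t z))) * exp (-ψ (f t z)) := by rw [hconj t ht z hz]
    _ = exp (ω * t) * f t z := by
        rw [← mul_assoc, mul_assoc (exp _ * _), ← exp_add, add_neg_cancel, exp_zero, mul_one]

theorem flow_linearization_general (hR : 0 < R) (hv : DifferentiableOn ℂ v (ball 0 R))
    (h0 : v 0 = 0) {ω : ℂ} (hω : 0 < ω.re) (hv' : deriv v 0 = -ω)
    (hre : ∀ z ∈ ball (0 : ℂ) R, (starRingEnd ℂ z * v z).re ≤ 0)
    (hf0 : ∀ z ∈ ball (0 : ℂ) R, f 0 z = z)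
    (hmem : ∀ t, 0 ≤ t → ∀ z ∈ ball (0 : ℂ) R, f t z ∈ ball (0 : ℂ) R)
    (hode : ∀ z ∈ ball (0 : ℂ) R, ∀ t, 0 ≤ t → HasDerivAt (fun s => f s z) (v (f t z)) t) :
    ∃ h : ℂ → ℂ, DifferentiableOn ℂ h (ball 0 R) ∧ deriv h 0 = 1 ∧
      (∀ z ∈ ball (0 : ℂ) R, Tendsto (fun t : ℝ => exp (ω * t) * f t z) atTop (𝓝 (h z))) ∧
      TendstoLocallyUniformlyOn (fun (t : ℝ) z => exp (ω * t) * f t z) h atTop (ball 0 R) ∧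
      ∀ z ∈ ball (0 : ℂ) R, ω * h z = -deriv h z * v z := by
  have hneg : ∀ z ∈ ball (0 : ℂ) R, (dslope v 0 z).re < 0 := fun z hz =>
    re_dslope_neg hv h0 (by simpa [hv'] using hω) hre hz
  obtain ⟨ψ, hψ0, hψ, hψv⟩ := exists_koenigs_exponent hR hv h0
    fun z hz hpz => by simpa [hpz] using hneg z hz
  rw [hv'] at hψv
  have hball : ball (0 : ℂ) R ∈ 𝓝 0 := ball_mem_nhds 0 hR
  have hh : DifferentiableOn ℂ (fun z => z * exp (ψ z)) (ball 0 R) :=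
    differentiableOn_id.mul hψ.cexp
  have hderiv : HasDerivAt (fun z => z * exp (ψ z)) 1 0 := by
    refine ((hasDerivAt_id' 0).mul (hψ.differentiableAt hball).hasDerivAt.cexp).congr_deriv ?_
    simp [hψ0]
  have hconj (t : ℝ) (ht : 0 ≤ t) (z : ℂ) (hz : z ∈ ball 0 R) :
      f t z * exp (ψ (f t z)) = exp (-ω * t) * (z * exp (ψ z)) := by
    simpa only [hf0 z hz] using apply_trajectory_eq_exp_mul isOpen_ball hh hψv
      (fun s hs => hmem s hs z hz) (hode z hz) ht
  have hlim := tendstoLocallyUniformlyOn_exp_mul_flow hψ0 hψ.continuousOn hball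
    (tendstoLocallyUniformlyOn_flow_zero hv h0 hneg hf0 hmem hode) hconj
  exact ⟨_, hh, hderiv.deriv, fun z hz => hlim.tendsto_at hz, hlim,
    fun z hz => by linear_combination hψv z hz⟩

end Flow

/-- Linearization of a Markovian holomorphic vector field: `e^{ωt} f_t` converges locally
uniformly on the disk to a holomorphic function `h` with `h'(0) = 1` satisfying
`ω h(z) = -h'(z) v(z)`. -/
theorem flow_linearization
    (v : ℂ → ℂ) (U : Set ℂ) (hU : IsOpen U)
    (hsub : closedBall (0 : ℂ) 1 ⊆ U)
    (hv : DifferentiableOn ℂ v U)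
    (h0 : v 0 = 0) (ω : ℝ) (hω : 0 < ω) (hv' : deriv v 0 = -(ω : ℂ))
    (hnz : ∀ z : ℂ, 0 < ‖z‖ → ‖z‖ ≤ 1 → v z ≠ 0)
    (hb : ∀ z : ℂ, ‖z‖ = 1 → ((starRingEnd ℂ) z * v z).re < 0)
    (f : ℝ → ℂ → ℂ)
    (hf0 : ∀ z ∈ ball (0 : ℂ) 1, f 0 z = z)
    (hmem : ∀ t : ℝ, 0 ≤ t → ∀ z ∈ ball (0 : ℂ) 1, f t z ∈ ball (0 : ℂ) 1)
    (hhol : ∀ t : ℝ, 0 ≤ t → DifferentiableOn ℂ (f t) (ball (0 : ℂ) 1))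
    (hode : ∀ z ∈ ball (0 : ℂ) 1, ∀ t : ℝ, 0 ≤ t →
      HasDerivAt (fun s : ℝ => f s z) (v (f t z)) t) :
    ∃ h : ℂ → ℂ, DifferentiableOn ℂ h (ball (0 : ℂ) 1) ∧ deriv h 0 = 1 ∧
      (∀ z ∈ ball (0 : ℂ) 1,
        Tendsto (fun t : ℝ => Complex.exp ((ω : ℂ) * t) * f t z) atTop (𝓝 (h z))) ∧
      TendstoLocallyUniformlyOn (fun t : ℝ => fun z : ℂ => Complex.exp ((ω : ℂ) * t) * f t z)
        h atTop (ball (0 : ℂ) 1) ∧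
      (∀ z ∈ ball (0 : ℂ) 1, (ω : ℂ) * h z = - deriv h z * v z) :=
  flow_linearization_general one_pos (hv.mono (ball_subset_closedBall.trans hsub)) h0 hω hv'
    (fun _ => re_conj_mul_nonpos_of_sphere (hv.mono hsub) h0
      fun z hz => (hb z (mem_sphere_zero_iff_norm.1 hz)).le) hf0 hmem hode
end

section
/- Let δ > 0 and let h be holomorphic and injective on the disk {|z| < 1 + δ} with h'(0) ≠ 0. Then there exist C > 0 and ρ ∈ (0,1) such that for all nonzero integers n, p: | ∫₀^{2π} ∫₀^{2π} log( |e^{iθ} - e^{iθ'}| / |h(e^{iθ}) - h(e^{iθ'})| ) e^{-inθ} e^{-ipθ'} dθ dθ' | ≤ C ρ^{|n| + |p|}. -/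
open Complex Metric

/-!
The difference quotient `(h z - h w) / (z - w)` is jointly continuous, holomorphic in each variable
and zero-free on the bidisk, the derivative of an injective holomorphic function having no zeros.
The bidisk is simply connected, so the quotient is `exp (F z w)` with `F` continuous and holomorphic
in each variable, and the kernel is `-Re F` on the torus. Moving the circle of integration in each
variable to radius `R` or `R⁻¹`, according to the sign of the frequency, multiplies the Fourier
coefficient of `F` by `R⁻¹ ^ (|n| + |p|)`. Taking real parts only mixes the frequencies `(n, p)` and
`(-n, -p)`.
-/

open Set Filter Topology

theorem continuousAt_dslope_prod {𝕜 E : Type*} [NontriviallyNormedField 𝕜]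
    [NormedAddCommGroup E] [NormedSpace 𝕜 E] [CompleteSpace E] {f : 𝕜 → E} {a b : 𝕜}
    (ha : AnalyticAt 𝕜 f a) (hb : AnalyticAt 𝕜 f b) :
    ContinuousAt (fun x : 𝕜 × 𝕜 => dslope f x.1 x.2) (a, b) := by
  rcases eq_or_ne a b with rfl | hne
  · rw [Metric.continuousAt_iff']
    intro ε hε
    have hstrict := (continuous_swap.tendsto (a, a)).eventually
      (ha.hasStrictDerivAt.hasStrictFDerivAt.isLittleO.def (half_pos hε))
    have hderiv := Metric.continuousAt_iff'.mp
      (ha.deriv.continuousAt.comp (x := (a, a)) continuousAt_fst) ε hε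
    filter_upwards [hstrict, hderiv] with ⟨x, y⟩ hxy hx
    rcases eq_or_ne x y with rfl | hne
    · simpa only [dslope_same, Function.comp_apply] using hx
    · refine lt_of_le_of_lt ?_ (half_lt_self hε)
      simp only [Prod.swap_prod_mk, ← sub_smul_dslope, ContinuousLinearMap.toSpanSingleton_apply,
        ← smul_sub, norm_smul, mul_comm ‖y - x‖] at hxy
      rw [dslope_same, dist_eq_norm]
      exact le_of_mul_le_mul_right hxy (norm_pos_iff.mpr (sub_ne_zero.mpr hne.symm))
  · have hslope : (fun x : 𝕜 × 𝕜 => dslope f x.1 x.2) =ᶠ[𝓝 (a, b)]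
        fun x => (x.2 - x.1)⁻¹ • (f x.2 - f x.1) := by
      filter_upwards [continuousAt_fst.ne_iff_eventually_ne continuousAt_snd |>.mp hne] with x hx
      rw [dslope_of_ne _ hx.symm, slope_def_module]
    refine ContinuousAt.congr ?_ hslope.symm
    exact ((continuousAt_snd.sub continuousAt_fst).inv₀ (sub_ne_zero.mpr hne.symm)).smul
      ((hb.continuousAt.comp continuousAt_snd).sub (ha.continuousAt.comp continuousAt_fst))

theorem ne_zero_of_frequently_ne_zero {X : Type*} [TopologicalSpace X] {x₀ : X}
    {G : X → ℂ → ℂ} {z₀ : ℂ} {r : ℝ} (hr : 0 < r)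
    (hG : ∀ z ∈ closedBall z₀ r, ContinuousAt (Function.uncurry G) (x₀, z))
    (hne : ∃ᶠ x in 𝓝 x₀, DiffContOnCl ℂ (G x) (ball z₀ r) ∧ ∀ z ∈ closedBall z₀ r, G x z ≠ 0)
    (hlim : ∀ z ∈ sphere z₀ r, G x₀ z ≠ 0) : G x₀ z₀ ≠ 0 := by
  intro hzero
  have hz₀ : z₀ ∈ closedBall z₀ r := mem_closedBall_self hr.le
  have hcont : ContinuousOn (G x₀) (sphere z₀ r) := fun z hz =>
    ((hG z (sphere_subset_closedBall hz)).comp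
      (f := fun z => (x₀, z)) (by fun_prop)).continuousWithinAt
  obtain ⟨m, hm, hmin⟩ := (isCompact_sphere z₀ r).exists_forall_le' hcont.norm
    fun z hz => norm_pos_iff.mpr (hlim z hz)
  have hsphere : ∀ᶠ x in 𝓝 x₀, ∀ z ∈ sphere z₀ r, m / 2 < ‖G x z‖ :=
    (isCompact_sphere z₀ r).eventually_forall_of_forall_eventually fun z hz =>
      (hG z (sphere_subset_closedBall hz)).norm.eventually_const_lt
        ((half_lt_self hm).trans_le (hmin z hz))
  have hcenter : ∀ᶠ x in 𝓝 x₀, ‖G x z₀‖ < m / 2 := by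
    have h : ContinuousAt (fun x => G x z₀) x₀ :=
      (hG z₀ hz₀).comp (f := fun x => (x, z₀)) (by fun_prop)
    exact h.norm.eventually_lt_const (by simpa [hzero] using hm)
  obtain ⟨x, ⟨hxd, hxne⟩, hxs, hxc⟩ := (hne.and_eventually (hsphere.and hcenter)).exists
  -- The maximum principle for `1 / G x` contradicts `‖G x z₀‖ < m / 2 < ‖G x z‖` on the sphere.
  have hle : ‖(G x)⁻¹ z₀‖ ≤ (m / 2)⁻¹ := by
    refine Complex.norm_le_of_forall_mem_frontier_norm_le isBounded_ball
      (hxd.inv ?_) ?_ (subset_closure (mem_ball_self hr))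
    · rw [closure_ball z₀ hr.ne']
      exact hxne
    · intro z hz
      rw [frontier_ball z₀ hr.ne'] at hz
      rw [Pi.inv_apply, norm_inv]
      gcongr
      exact (hxs z hz).le
  rw [Pi.inv_apply, norm_inv, inv_le_inv₀ (norm_pos_iff.mpr (hxne z₀ hz₀)) (by positivity)]
    at hle
  exact hle.not_gt hxc

theorem eventually_deriv_ne_zero_of_injOn {U : Set ℂ} (hU : IsOpen U) {f : ℂ → ℂ}
    (hf : DifferentiableOn ℂ f U) (hinj : InjOn f U) {z : ℂ} (hz : z ∈ U) :
    ∀ᶠ w in 𝓝[≠] z, deriv f w ≠ 0 := by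
  refine ((hf.deriv hU).analyticAt
    (hU.mem_nhds hz)).eventually_eq_zero_or_eventually_ne_zero.resolve_left fun hzero => ?_
  obtain ⟨r, hr, hball⟩ := Metric.eventually_nhds_iff_ball.mp (hzero.and (hU.mem_nhds hz))
  have hconst : ∀ w ∈ ball z r, w = z := fun w hw =>
    hinj (hball w hw).2 hz <| isOpen_ball.is_const_of_deriv_eq_zero (convex_ball z r).isPreconnected
      (hf.mono fun x hx => (hball x hx).2) (fun x hx => (hball x hx).1) hw (mem_ball_self hr)
  have hpunctured : ∀ᶠ w in 𝓝[≠] z, w ∈ ball z r ∧ w ≠ z :=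
    inter_mem (nhdsWithin_le_nhds (ball_mem_nhds z hr)) self_mem_nhdsWithin
  obtain ⟨w, hw, hwz⟩ := hpunctured.exists
  exact hwz (hconst w hw)

theorem dslope_add_right {𝕜 : Type*} [NontriviallyNormedField 𝕜] (f : 𝕜 → 𝕜) {w : 𝕜} (hw : w ≠ 0)
    (z : 𝕜) : dslope f z (z + w) = (f (z + w) - f z) / w := by
  rw [dslope_of_ne _ (by simpa using hw), slope_def_field, add_sub_cancel_left]

/-- Hurwitz's principle applies because the derivative is the limit as `w → 0` of the difference
quotients `ζ ↦ (f (ζ + w) - f ζ) / w`, which are zero-free by injectivity. -/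
theorem deriv_ne_zero_of_injOn {U : Set ℂ} (hU : IsOpen U) {f : ℂ → ℂ}
    (hf : DifferentiableOn ℂ f U) (hinj : InjOn f U) {z : ℂ} (hz : z ∈ U) : deriv f z ≠ 0 := by
  obtain ⟨r, hr, hball⟩ := nhds_basis_closedBall.eventually_iff.mp
    ((hU.eventually_mem hz).and
      (eventually_nhdsWithin_iff.mp (eventually_deriv_ne_zero_of_injOn hU hf hinj hz)))
  have han : ∀ ζ ∈ U, AnalyticAt ℂ f ζ := fun ζ hζ => hf.analyticAt (hU.mem_nhds hζ)
  have hshift : ∀ᶠ w in 𝓝 (0 : ℂ), ∀ ζ ∈ closedBall z r, ζ + w ∈ U :=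
    (isCompact_closedBall z r).eventually_forall_of_forall_eventually fun ζ hζ =>
      (continuous_snd.add continuous_fst).continuousAt.eventually
        (by simpa using hU.mem_nhds (hball hζ).1)
  have hquot : ∀ᶠ w in 𝓝[≠] (0 : ℂ), DiffContOnCl ℂ (fun ζ => dslope f ζ (ζ + w)) (ball z r) ∧
      ∀ ζ ∈ closedBall z r, dslope f ζ (ζ + w) ≠ 0 := by
    filter_upwards [self_mem_nhdsWithin, nhdsWithin_le_nhds hshift] with w hw hwU
    simp only [dslope_add_right f hw]
    refine ⟨DifferentiableOn.diffContOnCl fun ζ hζ => ?_, fun ζ hζ => ?_⟩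
    · rw [closure_ball z hr.ne'] at hζ
      have hfw : DifferentiableAt ℂ (fun ζ => f (ζ + w)) ζ :=
        differentiableAt_comp_add_const.mpr (han _ (hwU ζ hζ)).differentiableAt
      exact ((hfw.sub (han ζ (hball hζ).1).differentiableAt).div_const w).differentiableWithinAt
    · refine div_ne_zero (sub_ne_zero.mpr fun e => hw ?_) hw
      simpa using hinj (hwU ζ hζ) (hball hζ).1 e
  have hlimit : dslope f z (z + 0) ≠ 0 := by
    refine ne_zero_of_frequently_ne_zero (G := fun w ζ => dslope f ζ (ζ + w)) hr
      (fun ζ hζ => ?_) (hquot.frequently.filter_mono nhdsWithin_le_nhds) fun ζ hζ => ?_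
    · exact (continuousAt_dslope_prod (han ζ (hball hζ).1)
        (b := ζ + 0) (by simpa using han ζ (hball hζ).1)).comp
        (f := fun x : ℂ × ℂ => (x.2, x.2 + x.1)) (x := (0, ζ)) (by fun_prop)
    · simpa using (hball (sphere_subset_closedBall hζ)).2 (ne_of_mem_sphere hζ hr.ne')
  simpa using hlimit

theorem dslope_comm {𝕜 E : Type*} [NontriviallyNormedField 𝕜] [NormedAddCommGroup E]
    [NormedSpace 𝕜 E] (f : 𝕜 → E) (a b : 𝕜) : dslope f a b = dslope f b a := by
  rcases eq_or_ne a b with rfl | hne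
  · rfl
  · rw [dslope_of_ne f hne.symm, dslope_of_ne f hne, slope_comm]

theorem dslope_ne_zero_of_injOn {U : Set ℂ} (hU : IsOpen U) {f : ℂ → ℂ}
    (hf : DifferentiableOn ℂ f U) (hinj : InjOn f U) {z w : ℂ} (hz : z ∈ U) (hw : w ∈ U) :
    dslope f z w ≠ 0 := by
  rcases eq_or_ne w z with rfl | hne
  · rw [dslope_same]
    exact deriv_ne_zero_of_injOn hU hf hinj hw
  · rw [dslope_of_ne _ hne, slope_def_field]
    exact div_ne_zero (sub_ne_zero.mpr fun e => hne (hinj hw hz e)) (sub_ne_zero.mpr hne)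

theorem differentiableAt_of_cexp {E : Type*} [NormedAddCommGroup E] [NormedSpace ℂ E] {F : E → ℂ}
    {x : E} (hF : ContinuousAt F x) (hexp : DifferentiableAt ℂ (fun y => exp (F y)) x) :
    DifferentiableAt ℂ F x := by
  have hne : exp (F x) ≠ 0 := exp_ne_zero _
  have hinv := hF.eventually ((hasStrictDerivAt_exp (F x)).eventually_left_inverse hne)
  have hlog : DifferentiableAt ℂ ((hasStrictDerivAt_exp (F x)).localInverse _ _ _ hne)
      (exp (F x)) := ((hasStrictDerivAt_exp (F x)).to_localInverse hne).hasDerivAt.differentiableAt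
  exact (hlog.comp x hexp).congr_of_eventuallyEq (hinv.mono fun y hy => hy.symm)

theorem exists_continuousOn_exp_eq_of_convex {E : Type*} [NormedAddCommGroup E] [NormedSpace ℝ E]
    {s : Set E} (hs : Convex ℝ s) (hso : IsOpen s) {g : E → ℂ} (hg : ContinuousOn g s)
    (hne : ∀ x ∈ s, g x ≠ 0) : ∃ F : E → ℂ, ContinuousOn F s ∧ ∀ x ∈ s, exp (F x) = g x := by
  rcases s.eq_empty_or_nonempty with rfl | hsne
  · exact ⟨0, by simp⟩
  have := hs.contractibleSpace hsne
  have hsc : IsSimplyConnected s := (inferInstance : SimplyConnectedSpace s)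
  exact exists_continuousOn_eqOn_exp_comp hsc hso hg fun ⟨x, hx, hgx⟩ => hne x hx hgx

theorem exists_log_dslope {U : Set ℂ} (hUo : IsOpen U) (hUc : Convex ℝ U) {f : ℂ → ℂ}
    (hf : DifferentiableOn ℂ f U) (hinj : InjOn f U) :
    ∃ F : ℂ → ℂ → ℂ, ContinuousOn (Function.uncurry F) (U ×ˢ U) ∧
      (∀ z ∈ U, DifferentiableOn ℂ (F z) U) ∧ (∀ w ∈ U, DifferentiableOn ℂ (fun z => F z w) U) ∧
      ∀ z ∈ U, ∀ w ∈ U, exp (F z w) = dslope f z w := by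
  have han : ∀ z ∈ U, AnalyticAt ℂ f z := fun z hz => hf.analyticAt (hUo.mem_nhds hz)
  obtain ⟨F, hFc, hF⟩ := exists_continuousOn_exp_eq_of_convex (hUc.prod hUc) (hUo.prod hUo)
    (g := fun x => dslope f x.1 x.2)
    (fun x hx => (continuousAt_dslope_prod (han _ hx.1) (han _ hx.2)).continuousWithinAt)
    fun x hx => dslope_ne_zero_of_injOn hUo hf hinj hx.1 hx.2
  have hFat : ∀ z ∈ U, ∀ w ∈ U, ContinuousAt F (z, w) := fun z hz w hw =>
    hFc.continuousAt ((hUo.prod hUo).mem_nhds ⟨hz, hw⟩)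
  have hdslope : ∀ z ∈ U, ∀ w ∈ U, DifferentiableAt ℂ (dslope f z) w := fun z hz w hw =>
    ((differentiableOn_dslope (hUo.mem_nhds hz)).mpr hf).differentiableAt (hUo.mem_nhds hw)
  refine ⟨fun z w => F (z, w), hFc, fun z hz w hw => ?_, fun w hw z hz => ?_,
    fun z hz w hw => hF (z, w) ⟨hz, hw⟩⟩
  · refine (differentiableAt_of_cexp ((hFat z hz w hw).comp (f := (z, ·)) (by fun_prop))
      ((hdslope z hz w hw).congr_of_eventuallyEq ?_)).differentiableWithinAt
    filter_upwards [hUo.mem_nhds hw] with y hy using hF (z, y) ⟨hz, hy⟩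
  · refine (differentiableAt_of_cexp ((hFat z hz w hw).comp (f := (·, w)) (by fun_prop))
      ((hdslope w hw z hz).congr_of_eventuallyEq ?_)).differentiableWithinAt
    filter_upwards [hUo.mem_nhds hz] with y hy
    exact (hF (y, w) ⟨hy, hw⟩).trans (dslope_comm f y w)

theorem log_norm_div_norm_eq_neg_re {f : ℂ → ℂ} {z w L : ℂ} (hne : w ≠ z)
    (hL : exp L = dslope f z w) : Real.log (‖z - w‖ / ‖f z - f w‖) = -L.re := by
  rw [dslope_of_ne _ hne, slope_def_field] at hL
  rw [norm_sub_rev z, norm_sub_rev (f z), ← inv_div, Real.log_inv, ← norm_div, ← hL, norm_exp,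
    Real.log_exp]

theorem integral_circleMap_mul_exp_eq_circleIntegral {R : ℝ} (hR : R ≠ 0) (g : ℂ → ℂ) (n : ℤ) :
    ∫ θ in (0 : ℝ)..2 * Real.pi, g (circleMap 0 R θ) * exp (-I * n * θ) =
      -I * R ^ n * ∮ z in C(0, R), z ^ (-n - 1) * g z := by
  rw [circleIntegral, ← intervalIntegral.integral_const_mul]
  refine intervalIntegral.integral_congr fun θ _ => ?_
  have hRc : (R : ℂ) ≠ 0 := ofReal_ne_zero.mpr hR
  have hexp := exp_ne_zero (θ * I)
  have hpow : exp (-I * n * θ) = exp (θ * I) ^ (-n) := by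
    rw [← exp_int_mul]
    push_cast
    ring_nf
  simp only [deriv_circleMap, circleMap_zero, smul_eq_mul]
  rw [hpow, zpow_sub_one₀ (mul_ne_zero hRc hexp), mul_zpow, zpow_neg (R : ℂ)]
  field_simp
  rw [I_sq]
  ring

theorem circleIntegral_zpow_mul_eq_of_le {r R₁ R₂ : ℝ} (h0 : 0 < R₁) (hle : R₁ ≤ R₂) (hr : R₂ < r)
    {g : ℂ → ℂ} (hg : DifferentiableOn ℂ g (ball 0 r)) (m : ℤ) :
    ∮ z in C(0, R₂), z ^ m * g z = ∮ z in C(0, R₁), z ^ m * g z := by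
  have hd : ∀ z ∈ closedBall (0 : ℂ) R₂ \ ball 0 R₁,
      DifferentiableAt ℂ (fun z => z ^ m * g z) z := by
    intro z hz
    have hz0 : z ≠ 0 := by
      rintro rfl
      exact hz.2 (mem_ball_self h0)
    exact (differentiableAt_zpow.mpr (Or.inl hz0)).mul
      (hg.differentiableAt (isOpen_ball.mem_nhds (closedBall_subset_ball hr hz.1)))
  exact circleIntegral_eq_of_differentiable_on_annulus_off_countable h0 hle countable_empty
    (fun z hz => (hd z hz).continuousAt.continuousWithinAt)
    (fun z hz => hd z ⟨ball_subset_closedBall hz.1.1,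
      fun h => hz.1.2 (ball_subset_closedBall h)⟩)

theorem circleIntegral_zpow_mul_eq {r R₁ R₂ : ℝ} (hR₁ : R₁ ∈ Ioo 0 r) (hR₂ : R₂ ∈ Ioo 0 r)
    {g : ℂ → ℂ} (hg : DifferentiableOn ℂ g (ball 0 r)) (m : ℤ) :
    ∮ z in C(0, R₁), z ^ m * g z = ∮ z in C(0, R₂), z ^ m * g z := by
  rcases le_total R₁ R₂ with hle | hle
  · exact (circleIntegral_zpow_mul_eq_of_le hR₁.1 hle hR₂.2 hg m).symm
  · exact circleIntegral_zpow_mul_eq_of_le hR₂.1 hle hR₁.2 hg m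

theorem exists_mem_Ioc_zpow_neg_eq {R : ℝ} (hR : 1 ≤ R) (n : ℤ) :
    ∃ ρ ∈ Ioc 0 R, ρ ^ (-n) = R⁻¹ ^ n.natAbs := by
  have hpos : 0 < R := one_pos.trans_le hR
  rcases le_total 0 n with hn | hn
  · refine ⟨R, ⟨hpos, le_rfl⟩, ?_⟩
    rw [zpow_neg, inv_pow, ← zpow_natCast, Int.natAbs_of_nonneg hn]
  · refine ⟨R⁻¹, ⟨inv_pos.mpr hpos, (inv_le_one_of_one_le₀ hR).trans hR⟩, ?_⟩
    rw [← zpow_natCast, Int.ofNat_natAbs_of_nonpos hn]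

theorem exists_radius_integral_circleMap_eq {r R : ℝ} (hR : 1 ≤ R) (hr : R < r) (n : ℤ) :
    ∃ ρ ∈ Ioc 0 R, ∀ g : ℂ → ℂ, DifferentiableOn ℂ g (ball 0 r) →
      ∫ θ in (0 : ℝ)..2 * Real.pi, g (circleMap 0 1 θ) * exp (-I * n * θ) =
        ((R⁻¹ ^ n.natAbs : ℝ) : ℂ) *
          ∫ θ in (0 : ℝ)..2 * Real.pi, g (circleMap 0 ρ θ) * exp (-I * n * θ) := by
  obtain ⟨ρ, hρ, hpow⟩ := exists_mem_Ioc_zpow_neg_eq hR n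
  refine ⟨ρ, hρ, fun g hg => ?_⟩
  rw [integral_circleMap_mul_exp_eq_circleIntegral one_ne_zero,
    integral_circleMap_mul_exp_eq_circleIntegral hρ.1.ne', ← hpow,
    circleIntegral_zpow_mul_eq ⟨one_pos, hR.trans_lt hr⟩ ⟨hρ.1, hρ.2.trans_lt hr⟩ hg]
  have : (ρ : ℂ) ≠ 0 := ofReal_ne_zero.mpr hρ.1.ne'
  push_cast
  rw [zpow_neg, one_zpow]
  field_simp

theorem norm_integral_mul_exp_le {g : ℝ → ℂ} {M : ℝ} (hM : ∀ θ, ‖g θ‖ ≤ M) (n : ℤ) :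
    ‖∫ θ in (0 : ℝ)..2 * Real.pi, g θ * exp (-I * n * θ)‖ ≤ 2 * Real.pi * M := by
  have hnorm : ∀ θ : ℝ, ‖g θ * exp (-I * n * θ)‖ ≤ M := fun θ => by
    have he : ‖exp (-I * n * θ)‖ = 1 := by rw [norm_exp]; simp
    rw [norm_mul, he, mul_one]
    exact hM θ
  refine (intervalIntegral.norm_integral_le_of_norm_le_const fun θ _ => hnorm θ).trans_eq ?_
  rw [sub_zero, abs_of_pos Real.two_pi_pos, mul_comm]

theorem norm_integral_circleMap_mul_exp_le {r R M : ℝ} (hR : 1 ≤ R) (hr : R < r) {g : ℂ → ℂ}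
    (hg : DifferentiableOn ℂ g (ball 0 r)) (hM : ∀ z ∈ closedBall (0 : ℂ) R, ‖g z‖ ≤ M) (n : ℤ) :
    ‖∫ θ in (0 : ℝ)..2 * Real.pi, g (circleMap 0 1 θ) * exp (-I * n * θ)‖ ≤
      2 * Real.pi * M * R⁻¹ ^ n.natAbs := by
  obtain ⟨ρ, hρ, heq⟩ := exists_radius_integral_circleMap_eq hR hr n
  rw [heq g hg, norm_mul, norm_real, Real.norm_of_nonneg (by positivity), mul_comm]
  gcongr
  exact norm_integral_mul_exp_le (fun θ => hM _
    (closedBall_subset_closedBall hρ.2 (circleMap_mem_closedBall 0 hρ.1.le θ))) n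

/-- The Fourier coefficient of frequency `(n, p)` of a kernel on the torus `(ℝ / 2πℤ)²`, without
the normalising factor `(2π)⁻²`. -/
noncomputable def torusFourierIntegral (K : ℝ → ℝ → ℂ) (n p : ℤ) : ℂ :=
  ∫ θ in (0 : ℝ)..2 * Real.pi, ∫ θ' in (0 : ℝ)..2 * Real.pi,
    K θ θ' * exp (-I * n * θ) * exp (-I * p * θ')

namespace torusFourierIntegral

theorem congr_ae {K₁ K₂ : ℝ → ℝ → ℂ} (hK : ∀ θ, ∀ᵐ θ', K₁ θ θ' = K₂ θ θ') (n p : ℤ) :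
    torusFourierIntegral K₁ n p = torusFourierIntegral K₂ n p :=
  intervalIntegral.integral_congr fun θ _ => intervalIntegral.integral_congr_ae <| by
    filter_upwards [hK θ] with θ' hθ' _
    rw [hθ']

theorem conj (K : ℝ → ℝ → ℂ) (n p : ℤ) :
    torusFourierIntegral (fun θ θ' => (starRingEnd ℂ) (K θ θ')) n p =
      (starRingEnd ℂ) (torusFourierIntegral K (-n) (-p)) := by
  simp [torusFourierIntegral, ← intervalIntegral.intervalIntegral_conj, ← exp_conj]

theorem const_mul (c : ℂ) (K : ℝ → ℝ → ℂ) (n p : ℤ) :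
    torusFourierIntegral (fun θ θ' => c * K θ θ') n p = c * torusFourierIntegral K n p := by
  simp only [torusFourierIntegral, mul_assoc, intervalIntegral.integral_const_mul]

theorem add {K₁ K₂ : ℝ → ℝ → ℂ} (hK₁ : Continuous (Function.uncurry K₁))
    (hK₂ : Continuous (Function.uncurry K₂)) (n p : ℤ) :
    torusFourierIntegral (fun θ θ' => K₁ θ θ' + K₂ θ θ') n p =
      torusFourierIntegral K₁ n p + torusFourierIntegral K₂ n p := by
  have hcont : ∀ {K : ℝ → ℝ → ℂ}, Continuous (Function.uncurry K) →
      Continuous (Function.uncurry fun θ θ' : ℝ =>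
        K θ θ' * exp (-I * n * θ) * exp (-I * p * θ')) := fun hK => by
    fun_prop
  simp only [torusFourierIntegral, add_mul]
  rw [← intervalIntegral.integral_add]
  · refine intervalIntegral.integral_congr fun θ _ => intervalIntegral.integral_add ?_ ?_
    · exact ((hcont hK₁).uncurry_left θ).intervalIntegrable _ _
    · exact ((hcont hK₂).uncurry_left θ).intervalIntegrable _ _
  · exact (intervalIntegral.continuous_parametric_intervalIntegral_of_continuous'
      (hcont hK₁) _ _).intervalIntegrable _ _
  · exact (intervalIntegral.continuous_parametric_intervalIntegral_of_continuous'
      (hcont hK₂) _ _).intervalIntegrable _ _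

theorem swap {K : ℝ → ℝ → ℂ} (hK : Continuous (Function.uncurry K)) (n p : ℤ) :
    torusFourierIntegral K n p = ∫ θ' in (0 : ℝ)..2 * Real.pi,
      (∫ θ in (0 : ℝ)..2 * Real.pi, K θ θ' * exp (-I * n * θ)) * exp (-I * p * θ') := by
  have hcont : Continuous (Function.uncurry fun θ θ' : ℝ =>
      K θ θ' * exp (-I * n * θ) * exp (-I * p * θ')) := by fun_prop
  rw [torusFourierIntegral, MeasureTheory.intervalIntegral_intervalIntegral_swap
    ((hcont.continuousOn.integrableOn_compact (isCompact_uIcc.prod isCompact_uIcc)).mono_set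
      (prod_mono uIoc_subset_uIcc uIoc_subset_uIcc))]
  simp only [intervalIntegral.integral_mul_const]

theorem norm_re_le {K : ℝ → ℝ → ℂ} (hK : Continuous (Function.uncurry K)) {n p : ℤ} {B : ℝ}
    (hpos : ‖torusFourierIntegral K n p‖ ≤ B)
    (hneg : ‖torusFourierIntegral K (-n) (-p)‖ ≤ B) :
    ‖torusFourierIntegral (fun θ θ' => ((K θ θ').re : ℂ)) n p‖ ≤ B := by
  have hre : torusFourierIntegral (fun θ θ' => ((K θ θ').re : ℂ)) n p =
      2⁻¹ * (torusFourierIntegral K n p +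
        (starRingEnd ℂ) (torusFourierIntegral K (-n) (-p))) := by
    have hconj : Continuous (Function.uncurry fun θ θ' => (starRingEnd ℂ) (K θ θ')) :=
      continuous_conj.comp hK
    rw [← conj, ← add hK hconj, ← const_mul]
    simp only [re_eq_add_conj, div_eq_inv_mul]
  rw [hre, norm_mul, norm_inv, norm_ofNat]
  have := norm_add_le (torusFourierIntegral K n p)
    ((starRingEnd ℂ) (torusFourierIntegral K (-n) (-p)))
  rw [RCLike.norm_conj] at this
  linarith

theorem exists_radius_eq {r R : ℝ} (hR : 1 ≤ R) (hr : R < r) (n p : ℤ) :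
    ∃ ρ ∈ Ioc 0 R, ∀ F : ℝ → ℂ → ℂ, (∀ θ, DifferentiableOn ℂ (F θ) (ball 0 r)) →
      torusFourierIntegral (fun θ θ' => F θ (circleMap 0 1 θ')) n p =
        ((R⁻¹ ^ p.natAbs : ℝ) : ℂ) *
          torusFourierIntegral (fun θ θ' => F θ (circleMap 0 ρ θ')) n p := by
  obtain ⟨ρ, hρ, heq⟩ := exists_radius_integral_circleMap_eq hR hr p
  refine ⟨ρ, hρ, fun F hF => ?_⟩
  simp only [torusFourierIntegral, mul_right_comm _ (exp (-I * n * _)),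
    intervalIntegral.integral_mul_const, heq _ (hF _)]
  simp only [mul_assoc, intervalIntegral.integral_const_mul]

theorem norm_circleMap_le {r R M : ℝ} (hR : 1 ≤ R) (hr : R < r) {F : ℂ → ℂ → ℂ}
    (hFc : ContinuousOn (Function.uncurry F) (ball 0 r ×ˢ ball 0 r))
    (hF₁ : ∀ w ∈ ball 0 r, DifferentiableOn ℂ (fun z => F z w) (ball 0 r))
    (hF₂ : ∀ z ∈ ball 0 r, DifferentiableOn ℂ (F z) (ball 0 r))
    (hM : ∀ z ∈ closedBall 0 R, ∀ w ∈ closedBall 0 R, ‖F z w‖ ≤ M) (n p : ℤ) :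
    ‖torusFourierIntegral (fun θ θ' => F (circleMap 0 1 θ) (circleMap 0 1 θ')) n p‖ ≤
      (2 * Real.pi) ^ 2 * M * R⁻¹ ^ (n.natAbs + p.natAbs) := by
  obtain ⟨ρ, hρ, heq⟩ := exists_radius_eq hR hr n p
  have hmem : ∀ {s : ℝ}, s ∈ Ioc 0 R → ∀ θ, circleMap 0 s θ ∈ closedBall (0 : ℂ) R :=
    fun hs θ => closedBall_subset_closedBall hs.2 (circleMap_mem_closedBall 0 hs.1.le θ)
  have hsub : closedBall (0 : ℂ) R ⊆ ball 0 r := closedBall_subset_ball hr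
  have hone : (1 : ℝ) ∈ Ioc 0 R := ⟨one_pos, hR⟩
  have hcont : Continuous (Function.uncurry fun θ θ' : ℝ =>
      F (circleMap 0 1 θ) (circleMap 0 ρ θ')) :=
    hFc.comp_continuous (f := fun x : ℝ × ℝ => (circleMap 0 1 x.1, circleMap 0 ρ x.2))
      (by fun_prop) fun x => ⟨hsub (hmem hone x.1), hsub (hmem hρ x.2)⟩
  rw [heq (fun θ => F (circleMap 0 1 θ)) fun θ => hF₂ _ (hsub (hmem hone θ)), swap hcont, norm_mul,
    norm_real, Real.norm_of_nonneg (by positivity)]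
  calc R⁻¹ ^ p.natAbs * ‖∫ θ' in (0 : ℝ)..2 * Real.pi, (∫ θ in (0 : ℝ)..2 * Real.pi,
        F (circleMap 0 1 θ) (circleMap 0 ρ θ') * exp (-I * n * θ)) * exp (-I * p * θ')‖
    _ ≤ R⁻¹ ^ p.natAbs * (2 * Real.pi * (2 * Real.pi * M * R⁻¹ ^ n.natAbs)) := by
        gcongr
        refine norm_integral_mul_exp_le (fun θ' => ?_) p
        exact norm_integral_circleMap_mul_exp_le hR hr (hF₁ _ (hsub (hmem hρ θ')))
          (fun z hz => hM z hz _ (hmem hρ θ')) n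
    _ = (2 * Real.pi) ^ 2 * M * R⁻¹ ^ (n.natAbs + p.natAbs) := by ring

end torusFourierIntegral

theorem ae_circleMap_ne {c : ℂ} {R : ℝ} (hR : R ≠ 0) (z : ℂ) : ∀ᵐ θ, circleMap c R θ ≠ z :=
  ((countable_singleton z).preimage_circleMap c hR).ae_notMem MeasureTheory.volume

theorem exists_norm_torusFourierIntegral_log_le {f : ℂ → ℂ} {r R : ℝ} (hR : 1 ≤ R) (hr : R < r)
    (hf : DifferentiableOn ℂ f (ball 0 r)) (hinj : InjOn f (ball 0 r)) :
    ∃ C > 0, ∀ n p : ℤ, ‖torusFourierIntegral (fun θ θ' =>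
      (Real.log (‖circleMap 0 1 θ - circleMap 0 1 θ'‖ /
        ‖f (circleMap 0 1 θ) - f (circleMap 0 1 θ')‖) : ℂ)) n p‖ ≤
      C * R⁻¹ ^ (n.natAbs + p.natAbs) := by
  obtain ⟨F, hFc, hF₂, hF₁, hF⟩ := exists_log_dslope isOpen_ball (convex_ball 0 r) hf hinj
  have hsub : closedBall (0 : ℂ) R ⊆ ball 0 r := closedBall_subset_ball hr
  obtain ⟨M, hM⟩ := ((isCompact_closedBall (0 : ℂ) R).prod
    (isCompact_closedBall 0 R)).exists_bound_of_continuousOn (hFc.mono (prod_mono hsub hsub)).neg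
  have hcircle : ∀ θ, circleMap 0 1 θ ∈ ball (0 : ℂ) r := fun θ =>
    hsub (closedBall_subset_closedBall hR (circleMap_mem_closedBall 0 zero_le_one θ))
  have hcont : Continuous (Function.uncurry fun θ θ' : ℝ =>
      -F (circleMap 0 1 θ) (circleMap 0 1 θ')) :=
    hFc.neg.comp_continuous (f := fun x : ℝ × ℝ => (circleMap 0 1 x.1, circleMap 0 1 x.2))
      (by fun_prop) fun x => ⟨hcircle x.1, hcircle x.2⟩
  have hbound : ∀ n p : ℤ, ‖torusFourierIntegral (fun θ θ' =>
      -F (circleMap 0 1 θ) (circleMap 0 1 θ')) n p‖ ≤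
      (2 * Real.pi) ^ 2 * max M 1 * R⁻¹ ^ (n.natAbs + p.natAbs) :=
    torusFourierIntegral.norm_circleMap_le hR hr (F := fun z w => -F z w) hFc.neg
      (fun w hw => (hF₁ w hw).neg) (fun z hz => (hF₂ z hz).neg)
      fun z hz w hw => (hM (z, w) ⟨hz, hw⟩).trans (le_max_left _ _)
  refine ⟨(2 * Real.pi) ^ 2 * max M 1, by positivity, fun n p => ?_⟩
  rw [torusFourierIntegral.congr_ae (K₂ := fun θ θ' =>
    ((-F (circleMap 0 1 θ) (circleMap 0 1 θ')).re : ℂ)) fun θ => ?_]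
  · exact torusFourierIntegral.norm_re_le hcont (hbound n p)
      (by simpa only [Int.natAbs_neg] using hbound (-n) (-p))
  · filter_upwards [ae_circleMap_ne one_ne_zero (circleMap 0 1 θ)] with θ' hne
    rw [log_norm_div_norm_eq_neg_re hne (hF _ (hcircle θ) _ (hcircle θ')), neg_re]

/-- Exponential decay of Fourier coefficients of `log(|e^{iθ}-e^{iθ'}|/|h(e^{iθ})-h(e^{iθ'})|)`
for `h` univalent on a disk of radius `1 + δ`. -/
theorem fourier_decay_univalent
    (δ : ℝ) (hδ : 0 < δ) (h : ℂ → ℂ)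
    (hhol : DifferentiableOn ℂ h (ball (0 : ℂ) (1 + δ)))
    (hinj : Set.InjOn h (ball (0 : ℂ) (1 + δ)))
    (hder : deriv h 0 ≠ 0) :
    ∃ C : ℝ, 0 < C ∧ ∃ ρ : ℝ, ρ ∈ Set.Ioo (0 : ℝ) 1 ∧
      ∀ n p : ℤ, n ≠ 0 → p ≠ 0 →
        ‖∫ θ in (0:ℝ)..(2 * Real.pi), ∫ θ' in (0:ℝ)..(2 * Real.pi),
            ((Real.log (‖Complex.exp (Complex.I * θ) - Complex.exp (Complex.I * θ')‖ /
                ‖h (Complex.exp (Complex.I * θ)) - h (Complex.exp (Complex.I * θ'))‖) : ℝ) : ℂ) *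
              Complex.exp (-Complex.I * n * θ) * Complex.exp (-Complex.I * p * θ')‖
          ≤ C * ρ ^ (n.natAbs + p.natAbs) := by
  obtain ⟨R, hR, hr⟩ := exists_between (lt_add_of_pos_right (1 : ℝ) hδ)
  obtain ⟨C, hC, hbound⟩ := exists_norm_torusFourierIntegral_log_le hR.le hr hhol hinj
  refine ⟨C, hC, R⁻¹, ⟨inv_pos.mpr (one_pos.trans hR), inv_lt_one_of_one_lt₀ hR⟩,
    fun n p _ _ => ?_⟩
  have hcircle : ∀ θ : ℝ, circleMap 0 1 θ = exp (I * θ) := fun θ => by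
    rw [circleMap_zero, ofReal_one, one_mul, mul_comm]
  simpa only [torusFourierIntegral, hcircle] using hbound n p
end
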